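/- arXiv:2009.07073 — 2 statements merged into one kernel-verified Lean document; each statement's English description precedes it below -/
import Mathlib

section
/- Let G be a finite simple graph and let L be a set of specified leaks on V(G) with I(L) = 1. Then a set B ⊆ V(G) is an L-leaky forcing set if and only if B is a specified 1-leaky forcing set. -/
/-!
Zero forcing with leaks (vertex leaks, edge leaks, specified leaks, mixed leaks).

A force `u → v` is modelled as the ordered pair `(u, v) : V × V`.  All the
leak notions are encoded by a set `P` of *prohibited* forces.
-/

variable {V : Type*}

/-- With blue set `S` and prohibited set of forces `P`, vertex `u` can force `v`:
`u` is blue, `v` is a white neighbor of `u`, every other neighbor of `u` is blue,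
and the force `u → v` is not prohibited. -/
def CanForce (G : SimpleGraph V) (P : Set (V × V)) (S : Set V) (u v : V) : Prop :=
  u ∈ S ∧ v ∉ S ∧ G.Adj u v ∧ (∀ w, G.Adj u w → w ≠ v → w ∈ S) ∧ (u, v) ∉ P

/-- `Forced G P B v` means vertex `v` is eventually colored blue when the zero
forcing color change rule (avoiding the prohibited forces `P`) is applied
exhaustively starting from the blue set `B`. -/
inductive Forced (G : SimpleGraph V) (P : Set (V × V)) (B : Set V) : V → Prop
  | init : ∀ {v : V}, v ∈ B → Forced G P B v
  | force : ∀ {u v : V}, G.Adj u v → (u, v) ∉ P → Forced G P B u →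
      (∀ w, G.Adj u w → w ≠ v → Forced G P B w) → Forced G P B v

/-- `B^[∞]_P`, the set of blue vertices after exhaustively applying the zero
forcing rule with prohibited forces `P`, starting from `B`. -/
def closureSet (G : SimpleGraph V) (P : Set (V × V)) (B : Set V) : Set V :=
  {v | Forced G P B v}

/-- The prohibited forces corresponding to a set `L` of vertex leaks: a vertex
leak may not perform any force. -/
def vertexLeaks (L : Set V) : Set (V × V) := {p | p.1 ∈ L}

/-- The prohibited forces corresponding to a set `L` of edge leaks: no force may
pass across an edge leak in either direction. -/
def edgeLeaksP (L : Set (Sym2 V)) : Set (V × V) := {p | s(p.1, p.2) ∈ L}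

/-- `B` is an `ℓ`-leaky forcing set of `G`: despite any set of (at most) `ℓ`
vertex leaks, exhaustive forcing colors all of `V(G)` blue. -/
def IsLeakyForcingSet (G : SimpleGraph V) (ℓ : ℕ) (B : Set V) : Prop :=
  ∀ L : Finset V, L.card ≤ ℓ → closureSet G (vertexLeaks ↑L) B = Set.univ

/-- `B` is an `ℓ`-edge-leaky forcing set of `G`: despite any set of (at most)
`ℓ` edge leaks, exhaustive forcing colors all of `V(G)` blue. -/
def IsEdgeLeakyForcingSet (G : SimpleGraph V) (ℓ : ℕ) (B : Set V) : Prop :=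
  ∀ L : Finset (Sym2 V), ↑L ⊆ G.edgeSet → L.card ≤ ℓ →
    closureSet G (edgeLeaksP ↑L) B = Set.univ

/-- `B` is a specified `ℓ`-leaky forcing set of `G`: despite any set of (at
most) `ℓ` specified leaks (prohibited forces between adjacent vertices),
exhaustive forcing colors all of `V(G)` blue. -/
def IsSpecifiedLeakyForcingSet (G : SimpleGraph V) (ℓ : ℕ) (B : Set V) : Prop :=
  ∀ L : Finset (V × V), (∀ p ∈ L, G.Adj p.1 p.2) → L.card ≤ ℓ →
    closureSet G (↑L) B = Set.univ

/-- `B` is a mixed `ℓ`-leaky forcing set of `G`: despite any set of (at most)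
`ℓ` leaks, each a vertex leak, an edge leak, or a specified leak, exhaustive
forcing colors all of `V(G)` blue. -/
def IsMixedLeakyForcingSet (G : SimpleGraph V) (ℓ : ℕ) (B : Set V) : Prop :=
  ∀ (L₁ : Finset V) (L₂ : Finset (Sym2 V)) (L₃ : Finset (V × V)),
    ↑L₂ ⊆ G.edgeSet → (∀ p ∈ L₃, G.Adj p.1 p.2) →
    L₁.card + L₂.card + L₃.card ≤ ℓ →
    closureSet G (vertexLeaks ↑L₁ ∪ edgeLeaksP ↑L₂ ∪ (↑L₃ : Set (V × V))) B = Set.univ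

/-- A chronologically valid list of forces starting from a blue set. -/
def ValidList (G : SimpleGraph V) (P : Set (V × V)) : Set V → List (V × V) → Prop
  | _, [] => True
  | S, f :: l => CanForce G P S f.1 f.2 ∧ ValidList G P (insert f.2 S) l

/-- `F` is a forcing process (set of forces) of `B` in `G` with prohibited
forces `P`: the forces of `F` admit a chronological ordering in which each force
is valid and after applying all of them the whole graph is blue. -/
def IsForcingProcess (G : SimpleGraph V) (P : Set (V × V)) (B : Set V)
    (F : Set (V × V)) : Prop :=
  ∃ l : List (V × V), {f | f ∈ l} = F ∧ ValidList G P B l ∧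
    B ∪ Prod.snd '' F = Set.univ

/-- `B'` is obtained from `B` using `F`: `B` can color exactly `B'` blue using
only a subset of the forces in `F`, applied in a chronologically valid order. -/
def ObtainedUsing (G : SimpleGraph V) (P : Set (V × V)) (B : Set V) (F : Set (V × V))
    (B' : Set V) : Prop :=
  ∃ l : List (V × V), (∀ f ∈ l, f ∈ F) ∧ ValidList G P B l ∧
    B' = B ∪ Prod.snd '' {f | f ∈ l}

/-- `ℱ_P(B)`: the set of forces that belong to some forcing process of `B`
(with prohibited forces `P`). -/
def potentialForces (G : SimpleGraph V) (P : Set (V × V)) (B : Set V) : Set (V × V) :=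
  {f | ∃ F, IsForcingProcess G P B F ∧ f ∈ F}

/-- `Z_(ℓ)(G)`, the `ℓ`-leaky forcing number of `G`. -/
noncomputable def Zleaky (G : SimpleGraph V) (ℓ : ℕ) : ℕ :=
  sInf {n | ∃ B : Finset V, B.card = n ∧ IsLeakyForcingSet G ℓ ↑B}

/-- `Z'_(ℓ)(G)`, the `ℓ`-edge-leaky forcing number of `G`. -/
noncomputable def ZedgeLeaky (G : SimpleGraph V) (ℓ : ℕ) : ℕ :=
  sInf {n | ∃ B : Finset V, B.card = n ∧ IsEdgeLeakyForcingSet G ℓ ↑B}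

/-- `Z^s_(ℓ)(G)`, the specified `ℓ`-leaky forcing number of `G`. -/
noncomputable def Zspec (G : SimpleGraph V) (ℓ : ℕ) : ℕ :=
  sInf {n | ∃ B : Finset V, B.card = n ∧ IsSpecifiedLeakyForcingSet G ℓ ↑B}

/-- `Z^m_(ℓ)(G)`, the mixed `ℓ`-leaky forcing number of `G`. -/
noncomputable def Zmixed (G : SimpleGraph V) (ℓ : ℕ) : ℕ :=
  sInf {n | ∃ B : Finset V, B.card = n ∧ IsMixedLeakyForcingSet G ℓ ↑B}

/-- Two sets of specified leaks on `V(G)` are isomorphic if some bijection of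
the vertex set matches them up. -/
def LeaksIso (L₁ L₂ : Set (V × V)) : Prop :=
  ∃ φ : V ≃ V, ∀ x y : V, (x, y) ∈ L₁ ↔ (φ x, φ y) ∈ L₂

/-- `B` is an `L`-leaky forcing set of `G`: `B` colors all of `V(G)` blue
despite any set of specified leaks isomorphic to a subset of `L`. -/
def IsLLeakyForcingSet (G : SimpleGraph V) (L : Set (V × V)) (B : Set V) : Prop :=
  ∀ L' : Set (V × V), (∃ L₂ ⊆ L, LeaksIso L' L₂) → closureSet G L' B = Set.univ

/-- `L` is a set of independent leaks: `|T(L)| = |L|` and `T(L) ∩ H(L) = ∅`. -/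
def IsIndependentLeaks [DecidableEq V] (L : Finset (V × V)) : Prop :=
  (L.image Prod.fst).card = L.card ∧ Disjoint (L.image Prod.fst) (L.image Prod.snd)

/-- `I(L)`: the size of a largest set of independent leaks contained in `L`. -/
noncomputable def maxIndepLeaks [DecidableEq V] (L : Finset (V × V)) : ℕ :=
  sSup {n | ∃ M ⊆ L, IsIndependentLeaks M ∧ M.card = n}

/-- `Z_L(G)`, the `L`-leaky forcing number of `G`. -/
noncomputable def ZLleaky (G : SimpleGraph V) (L : Set (V × V)) : ℕ :=
  sInf {n | ∃ B : Finset V, B.card = n ∧ IsLLeakyForcingSet G L ↑B}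


theorem indep_le [DecidableEq V] (L M : Finset (V × V)) (hM : M ⊆ L)
    (h : IsIndependentLeaks M) : M.card ≤ maxIndepLeaks L := by
  refine le_csSup ⟨L.card, ?_⟩ ⟨M, hM, h, rfl⟩
  rintro n ⟨N, hN, -, rfl⟩
  exact Finset.card_le_card hN

theorem exists_indep [DecidableEq V] (L : Finset (V × V)) (hI : maxIndepLeaks L = 1) :
    ∃ a b, (a, b) ∈ L ∧ a ≠ b := by
  have hne : {n | ∃ M ⊆ L, IsIndependentLeaks M ∧ M.card = n}.Nonempty :=
    ⟨0, ∅, by simp, by simp [IsIndependentLeaks], by simp⟩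
  have hb : BddAbove {n | ∃ M ⊆ L, IsIndependentLeaks M ∧ M.card = n} := by
    refine ⟨L.card, ?_⟩
    rintro n ⟨N, hN, -, rfl⟩
    exact Finset.card_le_card hN
  have hmem := Nat.sSup_mem hne hb
  change maxIndepLeaks L ∈ _ at hmem
  rw [hI] at hmem
  obtain ⟨M, hM, hi, hc⟩ := hmem
  obtain ⟨⟨a, b⟩, rfl⟩ := Finset.card_eq_one.mp hc
  refine ⟨a, b, hM (by simp), ?_⟩
  have := hi.2
  simpa using this

/-- Proposition `inddouble`: if `L` is a set of specified
leaks on `V(G)` with `I(L) = 1`, then `B` is an `L`-leaky forcing set iff `B` is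
a specified `1`-leaky forcing set. -/
theorem statement14 [Fintype V] [DecidableEq V] (G : SimpleGraph V)
    (L : Finset (V × V)) (hI : maxIndepLeaks L = 1) (B : Set V) :
    IsLLeakyForcingSet G (↑L) B ↔ IsSpecifiedLeakyForcingSet G 1 B := by
  constructor
  · intro h A hA hc
    rcases Nat.le_one_iff_eq_zero_or_eq_one.mp hc with h0 | h1
    · rw [Finset.card_eq_zero] at h0
      subst h0
      exact h _ ⟨∅, by simp, Equiv.refl V, by simp⟩
    · obtain ⟨⟨p, q⟩, rfl⟩ := Finset.card_eq_one.mp h1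
      obtain ⟨a, b, hab, hne⟩ := exists_indep L hI
      have hpq : p ≠ q := (hA (p, q) (by simp)).ne
      obtain ⟨φ, h1, h2⟩ : ∃ φ : V ≃ V, φ p = a ∧ φ q = b := by
        refine ⟨(Equiv.swap p a).trans (Equiv.swap (Equiv.swap p a q) b), ?_, ?_⟩
        · have : a ≠ Equiv.swap p a q := by
            intro h'
            apply hpq
            apply (Equiv.swap p a).injective
            rw [← h', Equiv.swap_apply_left]
          simp only [Equiv.trans_apply, Equiv.swap_apply_left]
          exact Equiv.swap_apply_of_ne_of_ne this hne
        · simp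
      refine h _ ⟨{(a, b)}, by simpa using hab, φ, ?_⟩
      intro x y
      simp [← h1, ← h2]
  · rintro h L' ⟨L₂, hL₂, φ, hφ⟩
    let A : Set (V × V) := {p | p ∈ L' ∧ G.Adj p.1 p.2 ∧ Forced G L' B p.1 ∧
      ¬ Forced G L' B p.2 ∧ ∀ w, G.Adj p.1 w → w ≠ p.2 → Forced G L' B w}
    have key : A.Subsingleton := by
      rintro ⟨u, w⟩ ⟨hu1, hu2, hu3, hu4, hu5⟩ ⟨u', w'⟩ ⟨hv1, hv2, hv3, hv4, hv5⟩
      simp only at *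
      by_cases huu : u = u'
      · subst huu
        by_contra hne
        exact hv4 (hu5 w' hv2 (fun e => hne (by rw [e])))
      · exfalso
        have n1 : u ≠ w := fun e => hu4 (e ▸ hu3)
        have n2 : u ≠ w' := fun e => hv4 (e ▸ hu3)
        have n3 : u' ≠ w := fun e => hu4 (e ▸ hv3)
        have n4 : u' ≠ w' := fun e => hv4 (e ▸ hv3)
        have hne : ((φ u, φ w) : V × V) ≠ (φ u', φ w') := by
          intro e
          exact huu (φ.injective (Prod.ext_iff.mp e).1)
        have hle := indep_le L {(φ u, φ w), (φ u', φ w')} (by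
          intro x hx
          simp only [Finset.mem_insert, Finset.mem_singleton] at hx
          rcases hx with rfl | rfl
          · exact hL₂ ((hφ _ _).1 hu1)
          · exact hL₂ ((hφ _ _).1 hv1)) (by
          refine ⟨?_, ?_⟩
          · rw [Finset.card_pair hne, Finset.image_insert, Finset.image_singleton,
              Finset.card_pair (by simpa using huu)]
          · simp [n1, n2, n3, n4, n1.symm, n2.symm, n3.symm, n4.symm])
        rw [Finset.card_pair hne, hI] at hle
        omega
    have hfin : A.Finite := key.finite
    have hcl := h hfin.toFinset (fun p hp => ((hfin.mem_toFinset).1 hp).2.1) (by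
      rw [Finset.card_le_one]
      intro a ha b hb
      exact key ((hfin.mem_toFinset).1 ha) ((hfin.mem_toFinset).1 hb))
    rw [hfin.coe_toFinset] at hcl
    rw [Set.eq_univ_iff_forall] at hcl ⊢
    intro v
    have hv : Forced G A B v := hcl v
    change Forced G L' B v
    induction hv with
    | init hb => exact Forced.init hb
    | @force u v hadj hnot _ _ ihu ihw =>
      by_contra hcon
      refine hnot ⟨?_, hadj, ihu, hcon, ihw⟩
      by_contra hn
      exact hcon (Forced.force hadj hn ihu ihw)
end

section
/- Let ℓ ≥ 2 and let G = K_{ℓ+1} □ K₂ be the Cartesian product of the complete graph on ℓ+1 vertices with K₂, with vertex set {x₁,…,x_{ℓ+1}, y₁,…,y_{ℓ+1}}, where {x₁,…,x_{ℓ+1}} induces a clique, {y₁,…,y_{ℓ+1}} induces a clique, and the edges x_i y_i (1 ≤ i ≤ ℓ+1) form a perfect matching. Then the set B = {x₁,…,x_{ℓ+1}} is not a specified 2-leaky forcing set of G: the set of specified leaks {x₁→y₁, x₂→y₂} prevents B from coloring y₁ and y₂ blue. -/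
/-!
Zero forcing with leaks (vertex leaks, edge leaks, specified leaks, mixed leaks).

A force `u → v` is modelled as the ordered pair `(u, v) : V × V`.  All the
leak notions are encoded by a set `P` of *prohibited* forces.
-/

variable {V : Type*}

/-- With the two leaks, no forced vertex is `y₁` or `y₂`. -/
theorem forced_avoids (ℓ : ℕ) (h01 : (0 : Fin (ℓ + 1)) ≠ 1)
    (v : Fin (ℓ + 1) × Fin 2)
    (h : Forced (SimpleGraph.boxProd (⊤ : SimpleGraph (Fin (ℓ + 1))) (⊤ : SimpleGraph (Fin 2)))
      {(((0 : Fin (ℓ + 1)), (0 : Fin 2)), ((0 : Fin (ℓ + 1)), (1 : Fin 2))),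
       (((1 : Fin (ℓ + 1)), (0 : Fin 2)), ((1 : Fin (ℓ + 1)), (1 : Fin 2)))}
      {p | p.2 = 0} v) : v ≠ (0, 1) ∧ v ≠ (1, 1) := by
  induction h with
  | @init v hv =>
    simp only [Set.mem_ofPred_eq] at hv
    constructor <;> (rintro rfl; simp at hv)
  | @force u v hadj hP hu hw ihu ihw =>
    obtain ⟨j, b⟩ := u
    have hb : b = 0 ∨ b = 1 := by omega
    constructor
    · rintro rfl
      rw [SimpleGraph.boxProd_adj] at hadj
      rcases hb with rfl | rfl
      · simp at hadj
        subst hadj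
        simp at hP
      · have hj : j ≠ 1 := fun e => ihu.2 (by rw [e])
        refine (ihw (1, 1) ?_ ?_).2 rfl
        · simp [SimpleGraph.boxProd_adj, hj]
        · intro e
          exact h01 (congrArg Prod.fst e).symm
    · rintro rfl
      rw [SimpleGraph.boxProd_adj] at hadj
      rcases hb with rfl | rfl
      · simp at hadj
        subst hadj
        simp at hP
      · have hj : j ≠ 0 := fun e => ihu.1 (by rw [e])
        refine (ihw (0, 1) ?_ ?_).1 rfl
        · simp [SimpleGraph.boxProd_adj, hj]
        · intro e
          exact h01 (congrArg Prod.fst e)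

/-- in `G = K_{ℓ+1} □ K₂` (`ℓ ≥ 2`), with `x_i = (i, 0)` and
`y_i = (i, 1)`, the set `B = {x_i}` is not a specified `2`-leaky forcing set:
the specified leaks `{x₁→y₁, x₂→y₂}` prevent `B` from coloring `y₁, y₂` blue. -/
theorem statement15 (ℓ : ℕ) (hℓ : 2 ≤ ℓ)
    (G : SimpleGraph (Fin (ℓ + 1) × Fin 2))
    (hG : G = SimpleGraph.boxProd (⊤ : SimpleGraph (Fin (ℓ + 1))) (⊤ : SimpleGraph (Fin 2)))
    (B : Set (Fin (ℓ + 1) × Fin 2)) (hB : B = {p | p.2 = 0})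
    (L : Set ((Fin (ℓ + 1) × Fin 2) × (Fin (ℓ + 1) × Fin 2)))
    (hL : L = {(((0 : Fin (ℓ + 1)), (0 : Fin 2)), ((0 : Fin (ℓ + 1)), (1 : Fin 2))),
               (((1 : Fin (ℓ + 1)), (0 : Fin 2)), ((1 : Fin (ℓ + 1)), (1 : Fin 2)))}) :
    ¬ IsSpecifiedLeakyForcingSet G 2 B ∧
      ((0 : Fin (ℓ + 1)), (1 : Fin 2)) ∉ closureSet G L B ∧
      ((1 : Fin (ℓ + 1)), (1 : Fin 2)) ∉ closureSet G L B := by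
  have h01 : (0 : Fin (ℓ + 1)) ≠ 1 := by
    obtain ⟨k, rfl⟩ : ∃ k, ℓ = k + 1 := ⟨ℓ - 1, by omega⟩
    exact zero_ne_one
  subst hG hB hL
  refine ⟨?_, fun h => (forced_avoids ℓ h01 _ h).1 rfl, fun h => (forced_avoids ℓ h01 _ h).2 rfl⟩
  intro h
  have h2 := h {((0, 0), (0, 1)), ((1, 0), (1, 1))} (by
    intro p hp
    simp only [Finset.mem_insert, Finset.mem_singleton] at hp
    rcases hp with rfl | rfl <;> simp [SimpleGraph.boxProd_adj]) Finset.card_le_two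
  rw [Finset.coe_pair] at h2
  have h3 : ((0 : Fin (ℓ + 1)), (1 : Fin 2)) ∈ (Set.univ : Set (Fin (ℓ + 1) × Fin 2)) := trivial
  rw [← h2] at h3
  exact (forced_avoids ℓ h01 _ h3).1 rfl
end
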